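/- Zalcman rescaling lemma in ℂⁿ (contrapositive use): if a family 𝓕 of holomorphic functions on a domain Ω ⊆ ℂⁿ is not normal at a point z₀ ∈ Ω, then there exist functions f_j ∈ 𝓕, points z_j → z₀, and positive numbers ρ_j → 0 such that the rescaled functions g_j(ζ) = f_j(z_j + ρ_j ζ) converge uniformly on compact subsets of ℂⁿ to a nonconstant entire function g satisfying g^♯(ζ) ≤ g^♯(0) = 1 for all ζ ∈ ℂⁿ. -/

import Mathlib

open Filter Topology

abbrev Cn (n : ℕ) := EuclideanSpace ℂ (Fin n)

/-- Chordal (spherical) distance between two finite points of the Riemann sphere. -/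
noncomputable def chordal (a b : ℂ) : ℝ :=
  dist a b / (Real.sqrt (1 + ‖a‖^2) * Real.sqrt (1 + ‖b‖^2))

/-- Chordal distance between a finite point and ∞. -/
noncomputable def chordalInf (a : ℂ) : ℝ := 1 / Real.sqrt (1 + ‖a‖^2)

/-- Spherical derivative of a holomorphic function of several complex variables. -/
noncomputable def sphDeriv {E : Type} [NormedAddCommGroup E] [NormedSpace ℂ E]
    (f : E → ℂ) (z : E) : ℝ := ‖fderiv ℂ f z‖ / (1 + ‖f z‖^2)

/-- A family `F` of (holomorphic) functions is normal on `Ω`: every sequence from `F`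
has a subsequence which converges uniformly on compact subsets of `Ω` in the spherical
metric, either to a holomorphic function or to ∞. -/
def IsNormalFamily {E : Type} [NormedAddCommGroup E] [NormedSpace ℂ E]
    (Ω : Set E) (F : Set (E → ℂ)) : Prop :=
  ∀ s : ℕ → E → ℂ, (∀ j, s j ∈ F) →
    ∃ φ : ℕ → ℕ, StrictMono φ ∧
      ((∃ g : E → ℂ, DifferentiableOn ℂ g Ω ∧
          ∀ K, K ⊆ Ω → IsCompact K → ∀ ε > 0, ∃ N, ∀ j ≥ N, ∀ z ∈ K,
            chordal (s (φ j) z) (g z) < ε) ∨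
        (∀ K, K ⊆ Ω → IsCompact K → ∀ M : ℝ, ∃ N, ∀ j ≥ N, ∀ z ∈ K, M < ‖s (φ j) z‖))

/-!
On a ball of radius `r` with `f♯ ≤ M` and `M r ≤ 1/4`, a function with `|f(p)| ≥ 1` stays bounded
away from zero, because `(1 + |f|²)⁻¹` is Lipschitz with constant `M`. Hence `log |2 f|` is a
nonnegative harmonic function on complex lines through `p`, and Harnack's inequality bounds `|f(p)|`
by `max 1 (2 |f(q)|²)` for `q` near `p`: boundedness, and therefore also divergence to `∞`,
propagates along connected sets. With Montel's theorem this is Marty's criterion: locally bounded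
spherical derivatives imply normality.

If the family is not normal near `z₀`, the spherical derivatives are thus unbounded on every ball
around `z₀`. On the closed ball of radius `r` choose `z` maximizing `(r - |z - z₀|) f♯(z)`, and put
`ρ = 1 / f♯(z)`; the rescaled function `g` has `g♯(0) = 1` and `(S - |ζ|) g♯(ζ) ≤ S` for `|ζ| < S`,
where `S` is the maximum. As `S → ∞` the bound tends to `1`. To apply Montel's theorem to the
rescaled functions it remains to bound them at `0`: a function which is large on a whole ball has
small spherical derivative, by Cauchy's estimate for `1/g`, so `g♯(0) = 1` forces a value of
moderate size nearby, and Harnack's inequality carries the bound to `0`.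
-/

section Harnack

open Metric InnerProductSpace

theorem harnack_lower_bound {u : ℂ → ℝ} {c w : ℂ} {R : ℝ}
    (hu : HarmonicOnNhd u (closedBall c R)) (hnonneg : ∀ z ∈ sphere c R, 0 ≤ u z)
    (hw : w ∈ ball c R) : (R - ‖w - c‖) / (R + ‖w - c‖) * u c ≤ u w := by
  have hR : |R| = R := abs_of_pos (pos_of_mem_ball hw)
  have hu' : HarmonicOnNhd u (closedBall c |R|) := by rwa [hR]
  have hcont : ContinuousOn u (sphere c |R|) := hu'.continuousOn.mono sphere_subset_closedBall
  have hkernel : ContinuousOn (Complex.re ∘ herglotzRieszKernel c w) (sphere c |R|) :=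
    Complex.continuous_re.comp_continuousOn (continuousOn_herglotzRieszKernel_sphere hw)
  rw [← hu'.circleAverage_eq, ← smul_eq_mul, ← Real.circleAverage_smul,
    ← hu.circleAverage_re_herglotzRieszKernel_smul hw]
  refine Real.circleAverage_mono (hcont.const_smul _).circleIntegrable'
    (hkernel.smul hcont).circleIntegrable' fun z hz ↦ ?_
  rw [hR] at hz
  exact mul_le_mul_of_nonneg_right (le_re_herglotzRieszKernel hz hw) (hnonneg z hz)

-- The radius `3` makes Harnack's constant `(3 - 1) / (3 + 1) = 1 / 2`, hence the square.
theorem norm_le_norm_sq_of_one_le_norm_disc {f : ℂ → ℂ} (hf : AnalyticOnNhd ℂ f (closedBall 0 3))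
    (hone : ∀ t ∈ closedBall (0 : ℂ) 3, 1 ≤ ‖f t‖) : ‖f 0‖ ≤ ‖f 1‖ ^ 2 := by
  have hpos : ∀ t ∈ closedBall (0 : ℂ) 3, 0 < ‖f t‖ := fun t ht ↦ one_pos.trans_le (hone t ht)
  have hharmonic : HarmonicOnNhd (fun t ↦ Real.log ‖f t‖) (closedBall 0 3) := fun t ht ↦
    (hf t ht).harmonicAt_log_norm (norm_pos_iff.1 (hpos t ht))
  have hharnack := harnack_lower_bound hharmonic
    (fun t ht ↦ Real.log_nonneg (hone t (sphere_subset_closedBall ht)))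
    (show (1 : ℂ) ∈ ball 0 3 by simp)
  rw [← Real.log_le_log_iff (hpos 0 (by simp)) (pow_pos (hpos 1 (by simp)) 2), Real.log_pow]
  norm_num at hharnack ⊢
  linarith

variable {E : Type*} [NormedAddCommGroup E] [NormedSpace ℂ E]

theorem norm_le_norm_sq_of_one_le_norm {f : E → ℂ} {p q : E} {R : ℝ}
    (hf : DifferentiableOn ℂ f (ball p R)) (hone : ∀ z ∈ ball p R, 1 ≤ ‖f z‖)
    (hq : 3 * dist q p < R) : ‖f p‖ ≤ ‖f q‖ ^ 2 := by
  let line : ℂ → E := fun t ↦ p + t • (q - p)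
  have hline : Differentiable ℂ line := by fun_prop
  have hmaps : closedBall 0 3 ⊆ line ⁻¹' ball p R := fun t ht ↦ by
    rw [mem_closedBall_zero_iff] at ht
    have hdist : ‖t‖ * dist q p ≤ 3 * dist q p := by gcongr
    simpa [line, norm_smul, dist_eq_norm] using hdist.trans_lt hq
  have hanalytic : AnalyticOnNhd ℂ (f ∘ line) (closedBall 0 3) :=
    ((hf.comp hline.differentiableOn fun _ ht ↦ ht).analyticOnNhd
      (isOpen_ball.preimage hline.continuous)).mono hmaps
  simpa [line] using
    norm_le_norm_sq_of_one_le_norm_disc hanalytic fun t ht ↦ hone (line t) (hmaps ht)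

end Harnack

section CauchyEstimates

open Metric

variable {E V : Type*} [NormedAddCommGroup E] [NormedSpace ℂ E] [NormedAddCommGroup V]
  [NormedSpace ℂ V] {f : E → V} {x : E} {r B : ℝ}

theorem norm_fderiv_le_of_forall_mem_ball_norm_le (hr : 0 < r)
    (hf : DifferentiableOn ℂ f (ball x r)) (hB : ∀ z ∈ ball x r, ‖f z‖ ≤ B) :
    ‖fderiv ℂ f x‖ ≤ 2 * B / r := by
  refine Complex.norm_fderiv_le_div_of_mapsTo_ball hf (fun z hz ↦ ?_) hr
  rw [mem_closedBall, dist_eq_norm, two_mul]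
  exact norm_sub_le_of_le (hB z hz) (hB x (mem_ball_self hr))

theorem norm_fderiv_le_of_mem_half_ball (hr : 0 < r) (hf : DifferentiableOn ℂ f (ball x r))
    (hB : ∀ z ∈ ball x r, ‖f z‖ ≤ B) {y : E} (hy : y ∈ ball x (r / 2)) :
    ‖fderiv ℂ f y‖ ≤ 4 * B / r := by
  have hsub : ball y (r / 2) ⊆ ball x r := ball_subset_ball' (by linarith [mem_ball.1 hy])
  convert norm_fderiv_le_of_forall_mem_ball_norm_le (half_pos hr) (hf.mono hsub)
    (fun z hz ↦ hB z (hsub hz)) using 1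
  ring

theorem lipschitzOnWith_half_ball (hf : DifferentiableOn ℂ f (ball x r))
    (hB : ∀ z ∈ ball x r, ‖f z‖ ≤ B) :
    LipschitzOnWith (4 * B / r).toNNReal f (ball x (r / 2)) := by
  rcases le_or_gt r 0 with hr | hr
  · simp [ball_eq_empty.2 (by linarith : r / 2 ≤ 0)]
  refine Convex.lipschitzOnWith_of_nnnorm_fderiv_le (𝕜 := ℂ) (fun y hy ↦ ?_) (fun y hy ↦ ?_)
    (convex_ball x (r / 2))
  · exact hf.differentiableAt (isOpen_ball.mem_nhds (ball_subset_ball (by linarith) hy))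
  · rw [← NNReal.coe_le_coe]
    exact (norm_fderiv_le_of_mem_half_ball hr hf hB hy).trans (Real.le_coe_toNNReal _)

end CauchyEstimates

section SphericalDerivative

open Metric

variable {E : Type} [NormedAddCommGroup E] [NormedSpace ℂ E] {f : E → ℂ} {p q x : E} {r C M : ℝ}

theorem sphDeriv_nonneg (f : E → ℂ) (x : E) : 0 ≤ sphDeriv f x :=
  div_nonneg (norm_nonneg _) (by positivity)

theorem sphDeriv_const (c : ℂ) (x : E) : sphDeriv (fun _ ↦ c) x = 0 := by simp [sphDeriv]

-- The derivative in direction `v` is `-2 Re (conj (f x) * f'(x) v) / (1 + |f x|²)²`.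
theorem exists_hasFDerivAt_inv_one_add_norm_sq (hf : DifferentiableAt ℂ f x) :
    ∃ L : E →L[ℝ] ℝ, HasFDerivAt (fun z ↦ (1 + ‖f z‖ ^ 2)⁻¹) L x ∧ ‖L‖ ≤ sphDeriv f x := by
  have hden : 0 < 1 + ‖f x‖ ^ 2 := by positivity
  refine ⟨_, (hasDerivAt_inv hden.ne').comp_hasFDerivAt x
    ((hf.hasFDerivAt.restrictScalars ℝ).norm_sq.const_add 1),
    ContinuousLinearMap.opNorm_le_bound _ (sphDeriv_nonneg f x) fun v ↦ ?_⟩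
  have hinner : |inner ℝ (f x) (fderiv ℂ f x v)| ≤ ‖f x‖ * (‖fderiv ℂ f x‖ * ‖v‖) :=
    (abs_real_inner_le_norm _ _).trans (by gcongr; exact (fderiv ℂ f x).le_opNorm v)
  have hamgm : 2 * ‖f x‖ ≤ 1 + ‖f x‖ ^ 2 := by nlinarith [sq_nonneg (‖f x‖ - 1)]
  simp only [smul_apply, ContinuousLinearMap.comp_apply, innerSL_apply_apply,
    ContinuousLinearMap.coe_restrictScalars', smul_eq_mul, nsmul_eq_mul, Real.norm_eq_abs,
    abs_mul, abs_neg, abs_inv, abs_of_pos (pow_pos hden 2), Nat.cast_ofNat, abs_two]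
  rw [inv_mul_le_iff₀ (pow_pos hden 2)]
  calc 2 * |inner ℝ (f x) (fderiv ℂ f x v)|
      ≤ 2 * (‖f x‖ * (‖fderiv ℂ f x‖ * ‖v‖)) := by gcongr
    _ = 2 * ‖f x‖ * (‖fderiv ℂ f x‖ * ‖v‖) := by ring
    _ ≤ (1 + ‖f x‖ ^ 2) * (‖fderiv ℂ f x‖ * ‖v‖) := by gcongr
    _ = (1 + ‖f x‖ ^ 2) ^ 2 * (sphDeriv f x * ‖v‖) := by rw [sphDeriv]; field_simp

theorem inv_one_add_norm_sq_sub_le {s : Set E} (hs : Convex ℝ s)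
    (hf : ∀ z ∈ s, DifferentiableAt ℂ f z) (hM : ∀ z ∈ s, sphDeriv f z ≤ M) (hp : p ∈ s)
    (hq : q ∈ s) : (1 + ‖f q‖ ^ 2)⁻¹ - (1 + ‖f p‖ ^ 2)⁻¹ ≤ M * dist q p := by
  choose! L hL hLM using fun z hz ↦ exists_hasFDerivAt_inv_one_add_norm_sq (hf z hz)
  rw [dist_eq_norm]
  exact (le_abs_self _).trans <| hs.norm_image_sub_le_of_norm_hasFDerivWithin_le
    (fun z hz ↦ (hL z hz).hasFDerivWithinAt) (fun z hz ↦ (hLM z hz).trans (hM z hz)) hp hq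

theorem half_le_norm_of_sphDeriv_le (hf : DifferentiableOn ℂ f (ball p r))
    (hM : ∀ z ∈ ball p r, sphDeriv f z ≤ M) (hMr : M * r ≤ 1 / 4) (hp : 1 ≤ ‖f p‖)
    (hq : q ∈ ball p r) : 1 / 2 ≤ ‖f q‖ := by
  have hM0 : 0 ≤ M := (sphDeriv_nonneg f q).trans (hM q hq)
  have hlip := inv_one_add_norm_sq_sub_le (convex_ball p r)
    (fun z hz ↦ hf.differentiableAt (isOpen_ball.mem_nhds hz)) hM
    (mem_ball_self (pos_of_mem_ball hq)) hq
  have hdist : M * dist q p ≤ 1 / 4 := hMr.trans' (by gcongr; exact (mem_ball.1 hq).le)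
  have hinvp : (1 + ‖f p‖ ^ 2)⁻¹ ≤ 1 / 2 := by
    rw [inv_le_comm₀ (by positivity) (by norm_num)]
    nlinarith
  have hinvq : (1 + ‖f q‖ ^ 2)⁻¹ ≤ 3 / 4 := by linarith
  rw [inv_le_comm₀ (by positivity) (by norm_num)] at hinvq
  nlinarith [norm_nonneg (f q)]

theorem norm_le_max_of_sphDeriv_le (hf : DifferentiableOn ℂ f (ball p r))
    (hM : ∀ z ∈ ball p r, sphDeriv f z ≤ M) (hMr : M * r ≤ 1 / 4) (hq : 3 * dist q p < r) :
    ‖f p‖ ≤ max 1 (2 * ‖f q‖ ^ 2) := by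
  rcases le_total ‖f p‖ 1 with hp | hp
  · exact hp.trans (le_max_left _ _)
  have htwo := norm_le_norm_sq_of_one_le_norm (hf.const_mul 2) (fun z hz ↦ by
    rw [norm_mul, Complex.norm_ofNat]
    linarith [half_le_norm_of_sphDeriv_le hf hM hMr hp hz]) hq
  rw [norm_mul, norm_mul, Complex.norm_ofNat] at htwo
  exact le_max_of_le_right (by linarith)

theorem norm_le_max_of_mem_ball (hf : DifferentiableOn ℂ f (ball x r))
    (hM : ∀ z ∈ ball x r, sphDeriv f z ≤ M) (hMr : M * r ≤ 1 / 4) (hp : p ∈ ball x (r / 8))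
    (hq : q ∈ ball x (r / 8)) : ‖f p‖ ≤ max 1 (2 * ‖f q‖ ^ 2) := by
  rw [mem_ball] at hp hq
  have hsub : ball p (7 / 8 * r) ⊆ ball x r := ball_subset_ball' (by linarith)
  refine norm_le_max_of_sphDeriv_le (hf.mono hsub) (fun z hz ↦ hM z (hsub hz)) ?_ ?_
  · linarith
  · linarith [dist_triangle_right q p x, dist_nonneg (x := p) (y := x)]

theorem sphDeriv_le_of_forall_le_norm (hr : 0 < r) (hC : 0 < C)
    (hf : DifferentiableOn ℂ f (ball x r)) (hfC : ∀ z ∈ ball x r, C ≤ ‖f z‖) :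
    sphDeriv f x ≤ 2 / (C * r) := by
  have hpos : ∀ z ∈ ball x r, 0 < ‖f z‖ := fun z hz ↦ hC.trans_le (hfC z hz)
  have hx : x ∈ ball x r := mem_ball_self hr
  have hfx := (hf.differentiableAt (isOpen_ball.mem_nhds hx)).hasFDerivAt
  have hinv : fderiv ℂ (fun z ↦ (f z)⁻¹) x = -(f x ^ 2)⁻¹ • fderiv ℂ f x :=
    ((hasDerivAt_inv (norm_pos_iff.1 (hpos x hx))).comp_hasFDerivAt x hfx).fderiv
  have hcauchy := norm_fderiv_le_of_forall_mem_ball_norm_le hr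
    (hf.inv fun z hz ↦ norm_pos_iff.1 (hpos z hz)) (B := C⁻¹) fun z hz ↦ by
      rw [Pi.inv_apply, norm_inv]
      exact inv_anti₀ hC (hfC z hz)
  change ‖fderiv ℂ (fun z ↦ (f z)⁻¹) x‖ ≤ _ at hcauchy
  rw [hinv, norm_smul, norm_neg, norm_inv, norm_pow] at hcauchy
  calc sphDeriv f x ≤ ‖fderiv ℂ f x‖ / ‖f x‖ ^ 2 :=
        div_le_div_of_nonneg_left (norm_nonneg _) (pow_pos (hpos x hx) 2) (by linarith)
    _ = (‖f x‖ ^ 2)⁻¹ * ‖fderiv ℂ f x‖ := div_eq_inv_mul _ _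
    _ ≤ 2 * C⁻¹ / r := hcauchy
    _ = 2 / (C * r) := by rw [← div_eq_mul_inv, div_div]

-- With `|f| ≥ 7 / r` on the ball of radius `r / 3`, Cauchy's estimate would give `f♯ p ≤ 6 / 7`.
theorem norm_le_of_one_le_sphDeriv (hr : 0 < r) (hf : DifferentiableOn ℂ f (ball p r))
    (hM : ∀ z ∈ ball p r, sphDeriv f z ≤ M) (hMr : M * r ≤ 1 / 4) (hp : 1 ≤ sphDeriv f p) :
    ‖f p‖ ≤ max 1 (2 * (7 / r) ^ 2) := by
  obtain ⟨q, hq, hfq⟩ : ∃ q ∈ ball p (r / 3), ‖f q‖ < 7 / r := by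
    by_contra! hlarge
    have hsmall := sphDeriv_le_of_forall_le_norm (by positivity) (by positivity)
      (hf.mono (ball_subset_ball (by linarith))) hlarge
    have hconst : 2 / (7 / r * (r / 3)) = 6 / 7 := by field_simp; norm_num
    linarith
  calc ‖f p‖ ≤ max 1 (2 * ‖f q‖ ^ 2) :=
        norm_le_max_of_sphDeriv_le hf hM hMr (by linarith [mem_ball.1 hq])
    _ ≤ max 1 (2 * (7 / r) ^ 2) := by gcongr

/-- The function `ζ ↦ f (z + ρ ζ)`: `f` viewed from the point `z` at scale `ρ`. -/
def rescale (f : E → ℂ) (z : E) (ρ : ℝ) (ζ : E) : ℂ := f (z + (ρ : ℂ) • ζ)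

theorem differentiableAt_rescale {z ζ : E} {ρ : ℝ}
    (hf : DifferentiableAt ℂ f (z + (ρ : ℂ) • ζ)) : DifferentiableAt ℂ (rescale f z ρ) ζ :=
  hf.comp ζ (by fun_prop : DifferentiableAt ℂ (fun ζ : E ↦ z + (ρ : ℂ) • ζ) ζ)

theorem sphDeriv_rescale {z ζ : E} {ρ : ℝ} (hρ : 0 ≤ ρ)
    (hf : DifferentiableAt ℂ f (z + (ρ : ℂ) • ζ)) :
    sphDeriv (rescale f z ρ) ζ = ρ * sphDeriv f (z + (ρ : ℂ) • ζ) := by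
  have hinner : HasFDerivAt (fun ζ : E ↦ z + (ρ : ℂ) • ζ)
      ((ρ : ℂ) • ContinuousLinearMap.id ℂ E) ζ :=
    ((hasFDerivAt_id ζ).const_smul (ρ : ℂ)).const_add z
  have hchain : fderiv ℂ (rescale f z ρ) ζ = (ρ : ℂ) • fderiv ℂ f (z + (ρ : ℂ) • ζ) := by
    rw [show fderiv ℂ (rescale f z ρ) ζ = _ from (hf.hasFDerivAt.comp ζ hinner).fderiv,
      ContinuousLinearMap.comp_smul, ContinuousLinearMap.comp_id]
  rw [sphDeriv, hchain, norm_smul, Complex.norm_real, Real.norm_of_nonneg hρ, mul_div_assoc]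
  rfl

end SphericalDerivative

section Weierstrass

open Metric

variable {ι : Type*} {E V : Type*} [NormedAddCommGroup E] [NormedSpace ℂ E]
  [NormedAddCommGroup V] [NormedSpace ℂ V] {l : Filter ι} {F : ι → E → V} {f : E → V} {x : E}
  {r : ℝ}

theorem uniformCauchySeqOn_fderiv (hr : 0 < r)
    (hF : ∀ᶠ n in l, DifferentiableOn ℂ (F n) (ball x r))
    (hcauchy : UniformCauchySeqOn F l (ball x r)) :
    UniformCauchySeqOn (fun n ↦ fderiv ℂ (F n)) l (ball x (r / 2)) := by
  intro u hu
  obtain ⟨ε, hε, hεu⟩ := mem_uniformity_dist.1 hu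
  filter_upwards [hF.prod_mk hF, hcauchy _ (dist_mem_uniformity (by positivity : 0 < ε * r / 8))]
    with ⟨m, n⟩ ⟨hm, hn⟩ hmn y hy
  have hnhds : ball x r ∈ 𝓝 y := isOpen_ball.mem_nhds (ball_subset_ball (by linarith) hy)
  have hsmall : ∀ z ∈ ball x r, ‖(F m - F n) z‖ ≤ ε * r / 8 := fun z hz ↦ by
    simpa [dist_eq_norm] using (hmn z hz).le
  have hderiv := norm_fderiv_le_of_mem_half_ball hr (hm.sub hn) hsmall hy
  rw [fderiv_sub (hm.differentiableAt hnhds) (hn.differentiableAt hnhds), ← dist_eq_norm] at hderiv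
  refine hεu (hderiv.trans_lt ?_)
  calc 4 * (ε * r / 8) / r = ε / 2 := by field_simp; norm_num
    _ < ε := half_lt_self hε

theorem exists_hasFDerivAt_of_tendstoUniformlyOn_ball [CompleteSpace V] [l.NeBot] (hr : 0 < r)
    (hF : ∀ᶠ n in l, DifferentiableOn ℂ (F n) (ball x r))
    (hlim : TendstoUniformlyOn F f l (ball x r)) :
    ∃ f' : E →L[ℂ] V, HasFDerivAt f f' x ∧ Tendsto (fun n ↦ fderiv ℂ (F n) x) l (𝓝 f') := by
  have hcauchy := uniformCauchySeqOn_fderiv hr hF hlim.uniformCauchySeqOn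
  have hhalf : ball x (r / 2) ∈ 𝓝 x := ball_mem_nhds x (half_pos hr)
  have hsub : ball x (r / 2) ⊆ ball x r := ball_subset_ball (by linarith)
  have hpointwise : ∀ y ∈ ball x (r / 2), ∃ L, Tendsto (fun n ↦ fderiv ℂ (F n) y) l (𝓝 L) :=
    fun y hy ↦ cauchy_map_iff_exists_tendsto.1 (hcauchy.cauchy_map hy)
  choose! f' hf' using hpointwise
  have hderiv : TendstoUniformlyOnFilter (fun n ↦ fderiv ℂ (F n)) f' l (𝓝 x) :=
    (hcauchy.tendstoUniformlyOn_of_tendsto hf').tendstoUniformlyOnFilter.mono_right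
      (le_principal_iff.2 hhalf)
  refine ⟨f' x, ?_, hf' x (mem_of_mem_nhds hhalf)⟩
  refine hasFDerivAt_of_tendstoUniformlyOnFilter (f := F) hderiv ?_ ?_
  · filter_upwards [hF.prod_mk hhalf] with p ⟨hp, hy⟩
    exact (hp.differentiableAt (isOpen_ball.mem_nhds (hsub hy))).hasFDerivAt
  · filter_upwards [hhalf] with y hy using hlim.tendsto_at (hsub hy)

-- Weierstrass' theorem, applied to the translates of `f` by small vectors.
theorem continuousOn_fderiv_of_isOpen [CompleteSpace V] {U : Set E} (hU : IsOpen U)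
    (hf : DifferentiableOn ℂ f U) : ContinuousOn (fderiv ℂ f) U := by
  intro x hx
  have hUx := hU.mem_nhds hx
  obtain ⟨r, hr, hball⟩ := Metric.mem_nhds_iff.1 (inter_mem hUx
    ((hf.differentiableAt hUx).continuousAt.norm.eventually_lt_const (lt_add_one ‖f x‖)))
  have hfr : DifferentiableOn ℂ f (ball x r) := hf.mono fun z hz ↦ (hball hz).1
  have hlip := lipschitzOnWith_half_ball hfr fun z hz ↦ (hball hz).2.le
  set K := (4 * (‖f x‖ + 1) / r).toNNReal
  let translate : E → E → V := fun z y ↦ f (y + (z - x))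
  have hmem : ∀ z ∈ ball x (r / 4), ∀ y ∈ ball x (r / 4), y + (z - x) ∈ ball x (r / 2) := by
    intro z hz y hy
    rw [mem_ball, dist_eq_norm] at hz hy ⊢
    rw [add_sub_right_comm]
    linarith [norm_add_le (y - x) (z - x)]
  have hnear : ball x (r / 4) ∈ 𝓝 x := ball_mem_nhds x (by positivity)
  have hsub : ball x (r / 2) ⊆ ball x r := ball_subset_ball (by linarith)
  have hdiff : ∀ᶠ z in 𝓝 x, DifferentiableOn ℂ (translate z) (ball x (r / 4)) := by
    filter_upwards [hnear] with z hz
    exact hfr.comp (by fun_prop) fun y hy ↦ hsub (hmem z hz y hy)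
  have hlim : TendstoUniformlyOn translate f (𝓝 x) (ball x (r / 4)) := by
    rw [Metric.tendstoUniformlyOn_iff]
    intro ε hε
    have hsmall : Tendsto (fun z ↦ K * dist z x) (𝓝 x) (𝓝 0) :=
      Continuous.tendsto' (by fun_prop) _ _ (by simp)
    filter_upwards [hnear, hsmall.eventually_lt_const hε] with z hz hzε y hy
    have := hlip.dist_le_mul _ (ball_subset_ball (by linarith) hy) _ (hmem z hz y hy)
    rw [dist_self_add_right, ← dist_eq_norm] at this
    exact this.trans_lt hzε
  obtain ⟨f', hf', htendsto⟩ :=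
    exists_hasFDerivAt_of_tendstoUniformlyOn_ball (by positivity : 0 < r / 4) hdiff hlim
  refine ContinuousAt.continuousWithinAt ?_
  rw [ContinuousAt, hf'.fderiv]
  refine htendsto.congr fun z ↦ ?_
  rw [fderiv_comp_add_right, add_sub_cancel]

end Weierstrass

section Montel

open Metric

theorem exists_strictMono_forall_tendsto {κ V : Type*} [Countable κ] [NormedAddCommGroup V]
    [ProperSpace V] {X : ℕ → κ → V}
    (hX : ∀ k, IsBoundedUnder (· ≤ ·) atTop fun n ↦ ‖X n k‖) :
    ∃ φ : ℕ → ℕ, StrictMono φ ∧ ∃ a : κ → V, ∀ k, Tendsto (fun n ↦ X (φ n) k) atTop (𝓝 (a k)) := by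
  choose B hB using fun k ↦ (hX k).bddAbove_range
  obtain ⟨a, -, φ, hφ, hlim⟩ :=
    (isCompact_univ_pi fun k ↦ isCompact_closedBall (0 : V) (B k)).tendsto_subseq (x := X)
      fun n k _ ↦ mem_closedBall_zero_iff.2 (hB k ⟨n, rfl⟩)
  exact ⟨φ, hφ, a, tendsto_pi_nhds.1 hlim⟩

theorem uniformCauchySeqOnFilter_of_lipschitzOnWith {ι X Y : Type*} [PseudoMetricSpace X]
    [PseudoMetricSpace Y] {l : Filter ι} {F : ι → X → Y} {x : X} {s D : Set X} {K : NNReal}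
    (hs : s ∈ 𝓝 x) (hF : ∀ᶠ n in l, LipschitzOnWith K (F n) s) (hx : x ∈ closure D)
    (hD : ∀ d ∈ D, Cauchy (map (F · d) l)) : UniformCauchySeqOnFilter F l (𝓝 x) := by
  intro u hu
  obtain ⟨ε, hε, hεu⟩ := mem_uniformity_dist.1 hu
  have hsmall : ∀ᶠ y in 𝓝 x, K * dist y x < ε / 6 :=
    (Continuous.tendsto' (by fun_prop) _ 0 (by simp)).eventually_lt_const (by positivity)
  obtain ⟨d, ⟨hds, hdx⟩, hdD⟩ := mem_closure_iff_nhds.1 hx _ (inter_mem hs hsmall)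
  have hpair : ∀ᶠ p : ι × ι in l ×ˢ l, dist (F p.1 d) (F p.2 d) < ε / 3 :=
    (cauchy_map_iff.1 (hD d hdD)).2 (dist_mem_uniformity (by positivity))
  filter_upwards [((hF.prod_mk hF).and hpair).prod_mk (inter_mem hs hsmall)]
    with ⟨⟨m, n⟩, y⟩ ⟨⟨⟨hm, hn⟩, hmn⟩, hys, hyx⟩
  have hyd : K * dist y d < ε / 3 := by
    calc K * dist y d ≤ K * (dist y x + dist d x) := by gcongr; exact dist_triangle_right y d x
      _ = K * dist y x + K * dist d x := mul_add _ _ _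
      _ < ε / 6 + ε / 6 := add_lt_add hyx hdx
      _ = ε / 3 := by ring
  refine hεu ?_
  calc dist (F m y) (F n y)
      ≤ dist (F m y) (F m d) + dist (F m d) (F n d) + dist (F n y) (F n d) := by
        rw [dist_comm (F n y)]
        exact dist_triangle4 _ _ _ _
    _ < ε / 3 + ε / 3 + ε / 3 := by
        gcongr
        · exact (hm.dist_le_mul _ hys _ hds).trans_lt hyd
        · exact (hn.dist_le_mul _ hys _ hds).trans_lt hyd
    _ = ε := by ring

theorem tendstoLocallyUniformlyOn_of_uniformCauchySeqOnFilter {ι X Y : Type*} [TopologicalSpace X]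
    [UniformSpace Y] [CompleteSpace Y] [Nonempty Y] {l : Filter ι} [l.NeBot] {F : ι → X → Y}
    {U : Set X} (hU : IsOpen U) (hF : ∀ x ∈ U, UniformCauchySeqOnFilter F l (𝓝 x)) :
    ∃ g, TendstoLocallyUniformlyOn F g l U := by
  have hcauchy : ∀ x ∈ U, Cauchy (map (F · x) l) := fun x hx ↦
    cauchy_map_iff.2 ⟨‹_›, fun u hu ↦ (hF x hx u hu).curry.mono fun _ h ↦ h.self_of_nhds⟩
  choose! g hg using fun x hx ↦ cauchy_map_iff_exists_tendsto.1 (hcauchy x hx)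
  refine ⟨g, tendstoLocallyUniformlyOn_iff_filter.2 fun x hx ↦ ?_⟩
  rw [hU.nhdsWithin_eq hx]
  exact (hF x hx).tendstoUniformlyOnFilter_of_tendsto
    (eventually_of_mem (hU.mem_nhds hx) hg)

variable {ι κ : Type*} {E V : Type*} [NormedAddCommGroup E] [NormedSpace ℂ E]
  [NormedAddCommGroup V] [NormedSpace ℂ V] {l : Filter ι} {F : ι → E → V} {f : E → V} {x : E}
  {r : ℝ} {U : Set E}

/-- Montel's hypothesis at `x` for a filtered family of maps: on some ball around `x`, all
sufficiently late members are holomorphic with a common bound. -/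
def MontelConditionAt (F : ι → E → V) (l : Filter ι) (x : E) : Prop :=
  ∃ r > 0, ∃ B, ∀ᶠ n in l, DifferentiableOn ℂ (F n) (ball x r) ∧ ∀ y ∈ ball x r, ‖F n y‖ ≤ B

namespace MontelConditionAt

theorem comp_tendsto {l' : Filter κ} {φ : κ → ι} (hF : MontelConditionAt F l x)
    (hφ : Tendsto φ l' l) : MontelConditionAt (fun k ↦ F (φ k)) l' x := by
  obtain ⟨r, hr, B, h⟩ := hF
  exact ⟨r, hr, B, hφ.eventually h⟩

theorem isBoundedUnder_norm (hF : MontelConditionAt F l x) :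
    IsBoundedUnder (· ≤ ·) l fun n ↦ ‖F n x‖ := by
  obtain ⟨r, hr, B, h⟩ := hF
  exact ⟨B, eventually_map.2 <| h.mono fun n hn ↦ hn.2 x (mem_ball_self hr)⟩

theorem exists_eventually_lipschitzOnWith (hF : MontelConditionAt F l x) :
    ∃ s ∈ 𝓝 x, ∃ K, ∀ᶠ n in l, LipschitzOnWith K (F n) s := by
  obtain ⟨r, hr, B, h⟩ := hF
  exact ⟨ball x (r / 2), ball_mem_nhds x (half_pos hr), _,
    h.mono fun n hn ↦ lipschitzOnWith_half_ball hn.1 hn.2⟩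

end MontelConditionAt

theorem exists_tendstoLocallyUniformlyOn_of_montelConditionAt [TopologicalSpace.SeparableSpace E]
    [ProperSpace V] {F : ℕ → E → V} (hU : IsOpen U) (hF : ∀ x ∈ U, MontelConditionAt F atTop x) :
    ∃ φ : ℕ → ℕ, StrictMono φ ∧
      ∃ g, TendstoLocallyUniformlyOn (fun n ↦ F (φ n)) g atTop U := by
  obtain ⟨D, hDcount, hD⟩ := TopologicalSpace.exists_countable_dense E
  have : Countable ↥(U ∩ D) := (hDcount.mono Set.inter_subset_right).to_subtype
  obtain ⟨φ, hφ, a, ha⟩ := exists_strictMono_forall_tendsto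
    (X := fun n (d : ↥(U ∩ D)) ↦ F n d) fun d ↦ (hF d d.2.1).isBoundedUnder_norm
  refine ⟨φ, hφ, tendstoLocallyUniformlyOn_of_uniformCauchySeqOnFilter hU fun x hx ↦ ?_⟩
  obtain ⟨s, hs, K, hK⟩ :=
    ((hF x hx).comp_tendsto hφ.tendsto_atTop).exists_eventually_lipschitzOnWith
  exact uniformCauchySeqOnFilter_of_lipschitzOnWith hs hK (hD.open_subset_closure_inter hU hx)
    fun d hd ↦ (ha ⟨d, hd⟩).cauchy_map

theorem exists_hasFDerivAt_of_tendstoLocallyUniformlyOn [ProperSpace E] [CompleteSpace V] [l.NeBot]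
    (hU : IsOpen U) (hx : x ∈ U) (hlim : TendstoLocallyUniformlyOn F f l U) (hr : 0 < r)
    (hF : ∀ᶠ n in l, DifferentiableOn ℂ (F n) (ball x r)) :
    ∃ f' : E →L[ℂ] V, HasFDerivAt f f' x ∧ Tendsto (fun n ↦ fderiv ℂ (F n) x) l (𝓝 f') := by
  obtain ⟨t, ht, hball⟩ := nhds_basis_closedBall.mem_iff.1 (hU.mem_nhds hx)
  have hunif := (tendstoLocallyUniformlyOn_iff_forall_isCompact hU).1 hlim _ hball
    (isCompact_closedBall x t)
  refine exists_hasFDerivAt_of_tendstoUniformlyOn_ball (lt_min hr ht)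
    (hF.mono fun n hn ↦ hn.mono (ball_subset_ball (min_le_left _ _))) (hunif.mono ?_)
  exact (ball_subset_ball (min_le_right _ _)).trans ball_subset_closedBall

theorem exists_differentiableOn_tendstoLocallyUniformlyOn [ProperSpace E] [ProperSpace V]
    {F : ℕ → E → V} (hU : IsOpen U) (hF : ∀ x ∈ U, MontelConditionAt F atTop x) :
    ∃ φ : ℕ → ℕ, StrictMono φ ∧ ∃ g, DifferentiableOn ℂ g U ∧
      TendstoLocallyUniformlyOn (fun n ↦ F (φ n)) g atTop U := by
  obtain ⟨φ, hφ, g, hlim⟩ := exists_tendstoLocallyUniformlyOn_of_montelConditionAt hU hF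
  refine ⟨φ, hφ, g, fun x hx ↦ ?_, hlim⟩
  obtain ⟨r, hr, B, h⟩ := (hF x hx).comp_tendsto hφ.tendsto_atTop
  obtain ⟨g', hg', -⟩ :=
    exists_hasFDerivAt_of_tendstoLocallyUniformlyOn hU hx hlim hr (h.mono fun n hn ↦ hn.1)
  exact hg'.differentiableAt.differentiableWithinAt

end Montel

section Marty

open Metric

variable {ι κ : Type*} {E : Type} [NormedAddCommGroup E] [NormedSpace ℂ E] {l : Filter ι}
  {F : ι → E → ℂ} {x y : E} {M : ℝ} {U : Set E}

/-- Marty's hypothesis at `x` with constant `M` for a filtered family of functions: on some ball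
around `x`, all sufficiently late members are holomorphic with spherical derivative at most `M`.
A plain family is treated by indexing it by itself along the filter `⊤`. -/
def MartyConditionAt (F : ι → E → ℂ) (l : Filter ι) (x : E) (M : ℝ) : Prop :=
  ∃ r > 0, ∀ᶠ n in l, DifferentiableOn ℂ (F n) (ball x r) ∧ ∀ y ∈ ball x r, sphDeriv (F n) y ≤ M

namespace MartyConditionAt

theorem comp_tendsto {l' : Filter κ} {φ : κ → ι} (hF : MartyConditionAt F l x M)
    (hφ : Tendsto φ l' l) : MartyConditionAt (fun k ↦ F (φ k)) l' x M := by
  obtain ⟨r, hr, h⟩ := hF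
  exact ⟨r, hr, hφ.eventually h⟩

theorem exists_radius_mul_le (hF : MartyConditionAt F l x M) :
    ∃ r > 0, M * r ≤ 1 / 4 ∧
      ∀ᶠ n in l, DifferentiableOn ℂ (F n) (ball x r) ∧ ∀ y ∈ ball x r, sphDeriv (F n) y ≤ M := by
  obtain ⟨r, hr, h⟩ := hF
  refine ⟨min r (1 / (4 * (|M| + 1))), by positivity, ?_, h.mono fun n hn ↦ ?_⟩
  · calc M * min r (1 / (4 * (|M| + 1))) ≤ (|M| + 1) * (1 / (4 * (|M| + 1))) := by
          gcongr
          · linarith [le_abs_self M]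
          · exact min_le_right _ _
      _ = 1 / 4 := by field_simp
  · have hsub : ball x (min r (1 / (4 * (|M| + 1)))) ⊆ ball x r :=
      ball_subset_ball (min_le_left _ _)
    exact ⟨hn.1.mono hsub, fun y hy ↦ hn.2 y (hsub hy)⟩

theorem exists_ball_norm_le_max (hF : MartyConditionAt F l x M) :
    ∃ r > 0, ∀ᶠ n in l, DifferentiableOn ℂ (F n) (ball x r) ∧
      ∀ p ∈ ball x r, ∀ q ∈ ball x r, ‖F n p‖ ≤ max 1 (2 * ‖F n q‖ ^ 2) := by
  obtain ⟨r, hr, hMr, h⟩ := hF.exists_radius_mul_le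
  refine ⟨r / 8, by positivity, h.mono fun n hn ↦ ⟨?_, fun p hp q hq ↦ ?_⟩⟩
  · exact hn.1.mono (ball_subset_ball (by linarith))
  · exact norm_le_max_of_mem_ball hn.1 hn.2 hMr hp hq

end MartyConditionAt

theorem eventually_norm_le_imp_norm_le (hU : IsPreconnected U)
    (hF : ∀ x ∈ U, ∃ M, MartyConditionAt F l x M) (hx : x ∈ U) (hy : y ∈ U) (A : ℝ) :
    ∃ B, ∀ᶠ n in l, ‖F n x‖ ≤ A → ‖F n y‖ ≤ B := by
  let controls : E → E → Prop := fun x y ↦ ∀ A, ∃ B, ∀ᶠ n in l, ‖F n x‖ ≤ A → ‖F n y‖ ≤ B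
  suffices hcontrols : controls x y from hcontrols A
  refine hU.induction₂' controls (fun x hx ↦ ?_) (fun x y z _ _ _ hxy hyz A ↦ ?_) hx hy
  · obtain ⟨M, hM⟩ := hF x hx
    obtain ⟨r, hr, h⟩ := hM.exists_ball_norm_le_max
    have hnear : ∀ p ∈ ball x r, ∀ q ∈ ball x r, controls p q := fun p hp q hq A ↦
      ⟨max 1 (2 * A ^ 2), h.mono fun n hn hA ↦ (hn.2 q hq p hp).trans (by gcongr)⟩
    filter_upwards [mem_nhdsWithin_of_mem_nhds (ball_mem_nhds x hr)] with y hy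
    exact ⟨hnear x (mem_ball_self hr) y hy, hnear y hy x (mem_ball_self hr)⟩
  · obtain ⟨B, hB⟩ := hxy A
    obtain ⟨C, hC⟩ := hyz B
    exact ⟨C, by filter_upwards [hB, hC] with n hnB hnC hA using hnC (hnB hA)⟩

theorem montelConditionAt_of_isBoundedUnder_norm (hU : IsPreconnected U)
    (hF : ∀ x ∈ U, ∃ M, MartyConditionAt F l x M) (hx : x ∈ U)
    (hbdd : IsBoundedUnder (· ≤ ·) l fun n ↦ ‖F n x‖) (hy : y ∈ U) :
    MontelConditionAt F l y := by
  obtain ⟨A, hA⟩ := hbdd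
  obtain ⟨B, hB⟩ := eventually_norm_le_imp_norm_le hU hF hx hy A
  obtain ⟨M, hM⟩ := hF y hy
  obtain ⟨r, hr, h⟩ := hM.exists_ball_norm_le_max
  refine ⟨r, hr, max 1 (2 * B ^ 2), ?_⟩
  filter_upwards [eventually_map.1 hA, hB, h] with n hnA hnB hn
  exact ⟨hn.1, fun p hp ↦ (hn.2 p hp y (mem_ball_self hr)).trans (by gcongr; exact hnB hnA)⟩

theorem eventually_forall_lt_norm_of_tendsto_norm_atTop (hU : IsPreconnected U)
    (hF : ∀ x ∈ U, ∃ M, MartyConditionAt F l x M) (hx : x ∈ U)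
    (hdiv : Tendsto (fun n ↦ ‖F n x‖) l atTop) {K : Set E} (hK : IsCompact K) (hKU : K ⊆ U)
    (A : ℝ) : ∀ᶠ n in l, ∀ y ∈ K, A < ‖F n y‖ := by
  have hlocal : ∀ y ∈ K, ∀ᶠ p : ι × E in l ×ˢ 𝓝 y, A < ‖F p.1 p.2‖ := by
    intro y hy
    obtain ⟨M, hM⟩ := hF y (hKU hy)
    obtain ⟨r, hr, h⟩ := hM.exists_ball_norm_le_max
    obtain ⟨B, hB⟩ := eventually_norm_le_imp_norm_le hU hF (hKU hy) hx (max 1 (2 * A ^ 2))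
    filter_upwards [((h.and hB).and (hdiv.eventually_gt_atTop B)).prod_mk (ball_mem_nhds y hr)]
      with ⟨n, z⟩ ⟨⟨⟨hn, hnB⟩, hnx⟩, hz⟩
    by_contra! hA
    exact hnx.not_ge (hnB ((hn.2 y (mem_ball_self hr) z hz).trans (by gcongr)))
  have hprod : ∀ᶠ p : ι × E in l ×ˢ 𝓝ˢ K, A < ‖F p.1 p.2‖ := hK.mem_prod_nhdsSet_of_forall hlocal
  exact hprod.curry.mono fun n hn ↦ hn.self_of_nhdsSet

theorem chordal_le_dist (a b : ℂ) : chordal a b ≤ dist a b := by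
  have hone : ∀ c : ℂ, 1 ≤ √(1 + ‖c‖ ^ 2) := fun c ↦
    Real.one_le_sqrt.2 (le_add_of_nonneg_right (by positivity))
  exact div_le_self dist_nonneg (one_le_mul_of_one_le_of_one_le (hone a) (hone b))

theorem isNormalFamily_of_forall_martyConditionAt [ProperSpace E] {F : Set (E → ℂ)}
    (hUo : IsOpen U) (hU : IsConnected U)
    (hF : ∀ x ∈ U, ∃ M, MartyConditionAt (fun f : F ↦ (f : E → ℂ)) ⊤ x M) :
    IsNormalFamily U F := by
  intro s hs
  obtain ⟨x, hx⟩ := hU.nonempty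
  have hseq : ∀ φ : ℕ → ℕ, ∀ y ∈ U, ∃ M, MartyConditionAt (fun n ↦ s (φ n)) atTop y M :=
    fun φ y hy ↦ (hF y hy).imp fun M hM ↦
      hM.comp_tendsto (φ := fun n ↦ ⟨s (φ n), hs (φ n)⟩) tendsto_top
  by_cases hdiv : Tendsto (fun n ↦ ‖s n x‖) atTop atTop
  · refine ⟨id, strictMono_id, Or.inr fun K hKU hK A ↦ eventually_atTop.1 ?_⟩
    exact eventually_forall_lt_norm_of_tendsto_norm_atTop hU.isPreconnected (hseq id) hx hdiv hK
      hKU A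
  · simp only [Filter.tendsto_atTop, not_forall, not_eventually, not_le] at hdiv
    obtain ⟨A, hA⟩ := hdiv
    obtain ⟨φ, hφ, hφA⟩ := extraction_of_frequently_atTop hA
    have hbdd : IsBoundedUnder (· ≤ ·) atTop fun n ↦ ‖s (φ n) x‖ :=
      isBoundedUnder_of ⟨A, fun n ↦ (hφA n).le⟩
    obtain ⟨ψ, hψ, g, hg, hlim⟩ := exists_differentiableOn_tendstoLocallyUniformlyOn hUo
      fun y hy ↦ montelConditionAt_of_isBoundedUnder_norm hU.isPreconnected (hseq φ) hx hbdd hy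
    refine ⟨φ ∘ ψ, hφ.comp hψ, Or.inl ⟨g, hg, fun K hKU hK ε hε ↦ eventually_atTop.1 ?_⟩⟩
    have hunif := (tendstoLocallyUniformlyOn_iff_forall_isCompact hUo).1 hlim K hKU hK
    filter_upwards [Metric.tendstoUniformlyOn_iff.1 hunif ε hε] with n hn z hz
    exact (chordal_le_dist _ _).trans_lt (dist_comm (g z) _ ▸ hn z hz)

end Marty

section Zalcman

open Metric

variable {E : Type} [NormedAddCommGroup E] [NormedSpace ℂ E] {f : E → ℂ} {z₀ x w z : E}
  {r m C : ℝ} {U : Set E}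

/-- Zalcman's normalization: `g` is holomorphic on the ball of radius `m` around `0`, its spherical
derivative is `1` at `0`, and elsewhere is at most `m / (m - ‖ζ‖)`, which tends to `1` with `m`. -/
structure IsZalcmanNormalized (g : E → ℂ) (m : ℝ) : Prop where
  differentiableOn : DifferentiableOn ℂ g (ball 0 m)
  sphDeriv_zero : sphDeriv g 0 = 1
  mul_sphDeriv_le : ∀ ζ ∈ ball (0 : E) m, (m - ‖ζ‖) * sphDeriv g ζ ≤ m

theorem IsZalcmanNormalized.mono {g : E → ℂ} {m₁ m₂ : ℝ} (hg : IsZalcmanNormalized g m₂)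
    (hm : m₁ ≤ m₂) : IsZalcmanNormalized g m₁ where
  differentiableOn := hg.differentiableOn.mono (ball_subset_ball hm)
  sphDeriv_zero := hg.sphDeriv_zero
  mul_sphDeriv_le ζ hζ := by
    have hlarge := hg.mul_sphDeriv_le ζ (ball_subset_ball hm hζ)
    rw [mem_ball_zero_iff] at hζ
    rcases le_total (sphDeriv g ζ) 1 with hle | hge
    · nlinarith [norm_nonneg ζ]
    · nlinarith

theorem martyConditionAt_of_isZalcmanNormalized {ι : Type*} {l : Filter ι} {G : ι → E → ℂ}
    {m : ι → ℝ} (hm : Tendsto m l atTop) (hG : ∀ i, IsZalcmanNormalized (G i) (m i)) (hC : 1 < C)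
    (x : E) : MartyConditionAt G l x C := by
  refine ⟨1, one_pos, ?_⟩
  filter_upwards [hm.eventually_ge_atTop (‖x‖ + 1),
    hm.eventually_ge_atTop (C * (‖x‖ + 1) / (C - 1))] with i hi hiC
  have hsub : ∀ ζ ∈ ball x 1, ‖ζ‖ < ‖x‖ + 1 := fun ζ hζ ↦ by
    rw [mem_ball_iff_norm] at hζ
    linarith [norm_le_norm_add_norm_sub' ζ x]
  have hmem : ball x 1 ⊆ ball 0 (m i) := fun ζ hζ ↦
    mem_ball_zero_iff.2 ((hsub ζ hζ).trans_le hi)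
  refine ⟨(hG i).differentiableOn.mono hmem, fun ζ hζ ↦ ?_⟩
  rw [div_le_iff₀ (sub_pos.2 hC)] at hiC
  have hpos : 0 < m i - ‖ζ‖ := sub_pos.2 (mem_ball_zero_iff.1 (hmem hζ))
  refine le_of_mul_le_mul_left ?_ hpos
  nlinarith [(hG i).mul_sphDeriv_le ζ (hmem hζ), hsub ζ hζ]

theorem isZalcmanNormalized_rescale_of_isMaxOn (hU : IsOpen U) (hf : DifferentiableOn ℂ f U)
    (hball : closedBall z₀ r ⊆ U) (hz : z ∈ ball z₀ r) (hpos : 0 < sphDeriv f z)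
    (hmax : IsMaxOn (fun z ↦ (r - dist z z₀) * sphDeriv f z) (closedBall z₀ r) z) :
    IsZalcmanNormalized (rescale f z (sphDeriv f z)⁻¹) ((r - dist z z₀) * sphDeriv f z) := by
  set ρ := (sphDeriv f z)⁻¹ with hρ
  set S := (r - dist z z₀) * sphDeriv f z with hS
  have hρ0 : 0 < ρ := inv_pos.2 hpos
  have hρS : ρ * S = r - dist z z₀ := by rw [hρ, hS]; field_simp
  have hdist : ∀ ζ : E, dist (z + (ρ : ℂ) • ζ) z₀ ≤ ρ * ‖ζ‖ + dist z z₀ := fun ζ ↦ by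
    refine (dist_triangle _ z _).trans_eq ?_
    rw [dist_self_add_left, norm_smul, Complex.norm_real, Real.norm_of_nonneg hρ0.le]
  have hmem : ∀ ζ ∈ ball (0 : E) S, z + (ρ : ℂ) • ζ ∈ closedBall z₀ r := fun ζ hζ ↦ by
    have hlt : ρ * ‖ζ‖ < ρ * S := by gcongr; exact mem_ball_zero_iff.1 hζ
    exact mem_closedBall.2 (by linarith [hdist ζ])
  have hdiff : ∀ ζ ∈ ball (0 : E) S, DifferentiableAt ℂ f (z + (ρ : ℂ) • ζ) := fun ζ hζ ↦
    hf.differentiableAt (hU.mem_nhds (hball (hmem ζ hζ)))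
  have hS0 : 0 < S := mul_pos (sub_pos.2 hz) hpos
  refine ⟨fun ζ hζ ↦ (differentiableAt_rescale (hdiff ζ hζ)).differentiableWithinAt, ?_,
    fun ζ hζ ↦ ?_⟩
  · rw [sphDeriv_rescale hρ0.le (hdiff 0 (mem_ball_self hS0)), smul_zero, add_zero]
    exact inv_mul_cancel₀ hpos.ne'
  · rw [sphDeriv_rescale hρ0.le (hdiff ζ hζ)]
    calc (S - ‖ζ‖) * (ρ * sphDeriv f (z + (ρ : ℂ) • ζ))
        = (ρ * S - ρ * ‖ζ‖) * sphDeriv f (z + (ρ : ℂ) • ζ) := by ring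
      _ ≤ (r - dist (z + (ρ : ℂ) • ζ) z₀) * sphDeriv f (z + (ρ : ℂ) • ζ) :=
          mul_le_mul_of_nonneg_right (by linarith [hdist ζ]) (sphDeriv_nonneg _ _)
      _ ≤ S := hmax (hmem ζ hζ)

theorem exists_isZalcmanNormalized_rescale [ProperSpace E] (hU : IsOpen U)
    (hf : DifferentiableOn ℂ f U) (hball : closedBall z₀ r ⊆ U) (hw : w ∈ closedBall z₀ r)
    (hm : 0 < m) (hmw : m ≤ (r - dist w z₀) * sphDeriv f w) :
    ∃ z ∈ ball z₀ r, ∃ ρ > 0, ρ * m ≤ r ∧ IsZalcmanNormalized (rescale f z ρ) m := by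
  have hcont : ContinuousOn (sphDeriv f) U := (continuousOn_fderiv_of_isOpen hU hf).norm.div
    (continuousOn_const.add (hf.continuousOn.norm.pow 2)) fun z _ ↦ by positivity
  obtain ⟨z, hz, hmax⟩ := (isCompact_closedBall z₀ r).exists_isMaxOn ⟨w, hw⟩
    ((Continuous.continuousOn (by fun_prop : Continuous fun z ↦ r - dist z z₀)).mul
      (hcont.mono hball))
  have hmz : m ≤ (r - dist z z₀) * sphDeriv f z := hmw.trans (hmax hw)
  have hdist : 0 ≤ r - dist z z₀ := sub_nonneg.2 hz
  obtain ⟨hdist, hpos⟩ : 0 < r - dist z z₀ ∧ 0 < sphDeriv f z :=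
    (pos_and_pos_or_neg_and_neg_of_mul_pos (hm.trans_le hmz)).resolve_right fun h ↦
      h.1.not_ge hdist
  have hz' : z ∈ ball z₀ r := mem_ball.2 (sub_pos.1 hdist)
  refine ⟨z, hz', (sphDeriv f z)⁻¹, inv_pos.2 hpos, ?_,
    (isZalcmanNormalized_rescale_of_isMaxOn hU hf hball hz' hpos hmax).mono hmz⟩
  calc (sphDeriv f z)⁻¹ * m ≤ (sphDeriv f z)⁻¹ * ((r - dist z z₀) * sphDeriv f z) := by gcongr
    _ = r - dist z z₀ := by field_simp
    _ ≤ r := sub_le_self r dist_nonneg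

theorem exists_le_sphDeriv_of_not_isNormalFamily [ProperSpace E] {F : Set (E → ℂ)} (hr : 0 < r)
    (hF : ∀ f ∈ F, DifferentiableOn ℂ f (ball z₀ r)) (hnn : ¬ IsNormalFamily (ball z₀ r) F)
    (M : ℝ) : ∃ f ∈ F, ∃ w ∈ ball z₀ r, M ≤ sphDeriv f w := by
  by_contra! hM
  refine hnn (isNormalFamily_of_forall_martyConditionAt isOpen_ball
    ((convex_ball z₀ r).isConnected ⟨z₀, mem_ball_self hr⟩) fun x hx ↦ ?_)
  obtain ⟨t, ht, hsub⟩ := Metric.isOpen_iff.1 isOpen_ball x hx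
  exact ⟨M, t, ht, eventually_top.2 fun f ↦
    ⟨(hF f f.2).mono hsub, fun y hy ↦ (hM f f.2 y (hsub hy)).le⟩⟩

theorem exists_isZalcmanNormalized_rescale_of_not_isNormalFamily [ProperSpace E]
    {F : Set (E → ℂ)} (hU : IsOpen U) (hF : ∀ f ∈ F, DifferentiableOn ℂ f U) (hr : 0 < r)
    (hball : closedBall z₀ r ⊆ U) (hnn : ¬ IsNormalFamily (ball z₀ (r / 2)) F) (hm : 0 < m) :
    ∃ f ∈ F, ∃ z ∈ ball z₀ r, ∃ ρ > 0, ρ * m ≤ r ∧ IsZalcmanNormalized (rescale f z ρ) m := by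
  have hsub : ball z₀ (r / 2) ⊆ closedBall z₀ r :=
    ball_subset_closedBall.trans (closedBall_subset_closedBall (by linarith))
  obtain ⟨f, hf, w, hw, hlarge⟩ := exists_le_sphDeriv_of_not_isNormalFamily (half_pos hr)
    (fun f hf ↦ (hF f hf).mono (hsub.trans hball)) hnn (2 * m / r)
  refine ⟨f, hf, exists_isZalcmanNormalized_rescale hU (hF f hf) hball (hsub hw) hm ?_⟩
  calc m = r / 2 * (2 * m / r) := by field_simp
    _ ≤ (r - dist w z₀) * sphDeriv f w := by
        have hdist : r / 2 ≤ r - dist w z₀ := by linarith [mem_ball.1 hw]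
        gcongr
        exact (half_pos hr).le.trans hdist

theorem isBoundedUnder_norm_of_one_le_sphDeriv {ι : Type*} {l : Filter ι} {G : ι → E → ℂ} {M : ℝ}
    (hG : MartyConditionAt G l x M) (hone : ∀ᶠ i in l, 1 ≤ sphDeriv (G i) x) :
    IsBoundedUnder (· ≤ ·) l fun i ↦ ‖G i x‖ := by
  obtain ⟨r, hr, hMr, h⟩ := hG.exists_radius_mul_le
  refine isBoundedUnder_of_eventually_le (a := max 1 (2 * (7 / r) ^ 2)) ?_
  filter_upwards [h, hone] with i hi hix using norm_le_of_one_le_sphDeriv hr hi.1 hi.2 hMr hix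

theorem tendsto_sphDeriv_of_tendstoLocallyUniformlyOn [ProperSpace E] {ι : Type*} {l : Filter ι}
    [l.NeBot] {G : ι → E → ℂ} {g : E → ℂ} (hU : IsOpen U) (hx : x ∈ U)
    (hlim : TendstoLocallyUniformlyOn G g l U) (hr : 0 < r)
    (hG : ∀ᶠ i in l, DifferentiableOn ℂ (G i) (ball x r)) :
    Tendsto (fun i ↦ sphDeriv (G i) x) l (𝓝 (sphDeriv g x)) := by
  obtain ⟨g', hg', htendsto⟩ :=
    exists_hasFDerivAt_of_tendstoLocallyUniformlyOn hU hx hlim hr hG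
  rw [← hg'.fderiv] at htendsto
  exact htendsto.norm.div (((hlim.tendsto_at hx).norm.pow 2).const_add 1) (by positivity)

theorem exists_entire_limit_of_martyConditionAt [ProperSpace E] {G : ℕ → E → ℂ}
    (hG : ∀ C > 1, ∀ x, MartyConditionAt G atTop x C) (hzero : ∀ j, sphDeriv (G j) 0 = 1) :
    ∃ φ : ℕ → ℕ, StrictMono φ ∧ ∃ g : E → ℂ, Differentiable ℂ g ∧
      TendstoLocallyUniformlyOn (fun j ↦ G (φ j)) g atTop Set.univ ∧
      (∀ ζ, sphDeriv g ζ ≤ 1) ∧ sphDeriv g 0 = 1 := by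
  have hbdd : IsBoundedUnder (· ≤ ·) atTop fun j ↦ ‖G j 0‖ :=
    isBoundedUnder_norm_of_one_le_sphDeriv (hG 2 one_lt_two 0)
      (.of_forall fun j ↦ (hzero j).ge)
  obtain ⟨φ, hφ, g, hg, hlim⟩ := exists_differentiableOn_tendstoLocallyUniformlyOn isOpen_univ
    fun x _ ↦ montelConditionAt_of_isBoundedUnder_norm isPreconnected_univ
      (fun y _ ↦ ⟨2, hG 2 one_lt_two y⟩) (Set.mem_univ 0) hbdd (Set.mem_univ x)
  have hsub : ∀ C > 1, ∀ x, MartyConditionAt (fun j ↦ G (φ j)) atTop x C := fun C hC x ↦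
    (hG C hC x).comp_tendsto hφ.tendsto_atTop
  have hsph : ∀ x, Tendsto (fun j ↦ sphDeriv (G (φ j)) x) atTop (𝓝 (sphDeriv g x)) := fun x ↦
    have ⟨_, hr, h⟩ := hsub 2 one_lt_two x
    tendsto_sphDeriv_of_tendstoLocallyUniformlyOn isOpen_univ (Set.mem_univ x) hlim hr
      (h.mono fun _ hj ↦ hj.1)
  refine ⟨φ, hφ, g, differentiableOn_univ.1 hg, hlim, fun ζ ↦ ?_, ?_⟩
  · refine le_of_forall_gt_imp_ge_of_dense fun C hC ↦ ?_
    obtain ⟨r, hr, h⟩ := hsub C hC ζ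
    exact le_of_tendsto (hsph ζ) (h.mono fun j hj ↦ hj.2 ζ (mem_ball_self hr))
  · exact tendsto_nhds_unique (hsph 0) (tendsto_const_nhds.congr fun j ↦ (hzero (φ j)).symm)

theorem exists_seq_isZalcmanNormalized_rescale [ProperSpace E] {Ω : Set E} {F : Set (E → ℂ)}
    (hΩ : IsOpen Ω) (hhol : ∀ f ∈ F, DifferentiableOn ℂ f Ω) (hz₀ : z₀ ∈ Ω)
    (hnn : ¬ ∃ U : Set E, IsOpen U ∧ z₀ ∈ U ∧ U ⊆ Ω ∧ IsNormalFamily U F) :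
    ∃ (f : ℕ → E → ℂ) (z : ℕ → E) (ρ : ℕ → ℝ), (∀ j, f j ∈ F) ∧ (∀ j, z j ∈ Ω) ∧
      Tendsto z atTop (𝓝 z₀) ∧ (∀ j, 0 < ρ j) ∧ Tendsto ρ atTop (𝓝 0) ∧
      ∀ j : ℕ, IsZalcmanNormalized (rescale (f j) (z j) (ρ j)) (j + 1) := by
  obtain ⟨R, hR, hball⟩ := nhds_basis_closedBall.mem_iff.1 (hΩ.mem_nhds hz₀)
  let radius : ℕ → ℝ := fun j ↦ R / (j + 1)
  have hradius : ∀ j, 0 < radius j := fun j ↦ by positivity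
  have hsub : ∀ j, closedBall z₀ (radius j) ⊆ Ω := fun j ↦
    (closedBall_subset_closedBall (div_le_self hR.le (by simp))).trans hball
  have hlim : Tendsto radius atTop (𝓝 0) := by
    simpa [radius, div_eq_mul_inv] using tendsto_one_div_add_atTop_nhds_zero_nat.const_mul R
  have hpick : ∀ j, ∃ f ∈ F, ∃ z ∈ ball z₀ (radius j), ∃ ρ > 0, ρ * (j + 1) ≤ radius j ∧
      IsZalcmanNormalized (rescale f z ρ) (j + 1) := fun j ↦
    exists_isZalcmanNormalized_rescale_of_not_isNormalFamily hΩ hhol (hradius j) (hsub j)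
      (fun h ↦ hnn ⟨_, isOpen_ball, mem_ball_self (half_pos (hradius j)),
        (ball_subset_closedBall.trans (closedBall_subset_closedBall (half_le_self (hradius j).le))
          ).trans (hsub j), h⟩) (by positivity)
  choose f hf z hz ρ hρ hρr hnorm using hpick
  refine ⟨f, z, ρ, hf, fun j ↦ hsub j (ball_subset_closedBall (hz j)), ?_, hρ, ?_, hnorm⟩
  · exact tendsto_iff_dist_tendsto_zero.2
      (squeeze_zero (fun j ↦ dist_nonneg) (fun j ↦ (hz j).le) hlim)
  · refine squeeze_zero (fun j ↦ (hρ j).le) (fun j ↦ ?_) hlim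
    exact (le_mul_of_one_le_right (hρ j).le (by simp)).trans (hρr j)

end Zalcman

theorem stmt14_general {E : Type} [NormedAddCommGroup E] [NormedSpace ℂ E] [ProperSpace E]
    {Ω : Set E} (hΩ : IsOpen Ω) (F : Set (E → ℂ)) (hhol : ∀ f ∈ F, DifferentiableOn ℂ f Ω)
    (z₀ : E) (hz₀ : z₀ ∈ Ω)
    (hnn : ¬ ∃ U : Set E, IsOpen U ∧ z₀ ∈ U ∧ U ⊆ Ω ∧ IsNormalFamily U F) :
    ∃ f : ℕ → E → ℂ, ∃ z : ℕ → E, ∃ ρ : ℕ → ℝ, ∃ g : E → ℂ,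
      (∀ j, f j ∈ F) ∧ (∀ j, z j ∈ Ω) ∧ Tendsto z atTop (𝓝 z₀) ∧
      (∀ j, 0 < ρ j) ∧ Tendsto ρ atTop (𝓝 0) ∧
      Differentiable ℂ g ∧ (¬ ∃ c : ℂ, ∀ ζ, g ζ = c) ∧
      (∀ K : Set E, IsCompact K → ∀ ε > 0, ∃ N, ∀ j ≥ N, ∀ ζ ∈ K,
        ‖f j (z j + (ρ j : ℂ) • ζ) - g ζ‖ < ε) ∧
      (∀ ζ, sphDeriv g ζ ≤ 1) ∧ sphDeriv g 0 = 1 := by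
  obtain ⟨f, z, ρ, hf, hz, hztendsto, hρ, hρtendsto, hnorm⟩ :=
    exists_seq_isZalcmanNormalized_rescale hΩ hhol hz₀ hnn
  have hm : Tendsto (fun j : ℕ ↦ (j + 1 : ℝ)) atTop atTop :=
    tendsto_atTop_add_const_right _ _ tendsto_natCast_atTop_atTop
  obtain ⟨φ, hφ, g, hg, hlim, hle, hone⟩ := exists_entire_limit_of_martyConditionAt
    (fun C hC ↦ martyConditionAt_of_isZalcmanNormalized hm hnorm hC)
    fun j ↦ (hnorm j).sphDeriv_zero
  refine ⟨f ∘ φ, z ∘ φ, ρ ∘ φ, g, fun j ↦ hf (φ j), fun j ↦ hz (φ j),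
    hztendsto.comp hφ.tendsto_atTop, fun j ↦ hρ (φ j), hρtendsto.comp hφ.tendsto_atTop, hg,
    ?_, fun K hK ε hε ↦ eventually_atTop.1 ?_, hle, hone⟩
  · rintro ⟨c, hc⟩
    rw [funext hc, sphDeriv_const] at hone
    exact zero_ne_one hone
  · have hunif := (tendstoLocallyUniformlyOn_iff_forall_isCompact isOpen_univ).1 hlim K
      (Set.subset_univ K) hK
    filter_upwards [Metric.tendstoUniformlyOn_iff.1 hunif ε hε] with j hj ζ hζ
    rw [← dist_eq_norm, dist_comm]
    exact hj ζ hζ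

/-- Zalcman's rescaling lemma in ℂⁿ. -/
theorem stmt14 {n : ℕ} {Ω : Set (Cn n)} (hΩ : IsOpen Ω) (hconn : IsConnected Ω)
    (F : Set (Cn n → ℂ)) (hhol : ∀ f ∈ F, DifferentiableOn ℂ f Ω)
    (z₀ : Cn n) (hz₀ : z₀ ∈ Ω)
    (hnn : ¬ ∃ U : Set (Cn n), IsOpen U ∧ z₀ ∈ U ∧ U ⊆ Ω ∧ IsNormalFamily U F) :
    ∃ f : ℕ → Cn n → ℂ, ∃ z : ℕ → Cn n, ∃ ρ : ℕ → ℝ, ∃ g : Cn n → ℂ,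
      (∀ j, f j ∈ F) ∧ (∀ j, z j ∈ Ω) ∧ Tendsto z atTop (nhds z₀) ∧
      (∀ j, 0 < ρ j) ∧ Tendsto ρ atTop (nhds 0) ∧
      Differentiable ℂ g ∧ (¬ ∃ c : ℂ, ∀ ζ, g ζ = c) ∧
      (∀ K : Set (Cn n), IsCompact K → ∀ ε > 0, ∃ N, ∀ j ≥ N, ∀ ζ ∈ K,
        ‖f j (z j + (ρ j : ℂ) • ζ) - g ζ‖ < ε) ∧
      (∀ ζ, sphDeriv g ζ ≤ 1) ∧ sphDeriv g 0 = 1 := by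
  exact stmt14_general hΩ F hhol z₀ hz₀ hnn
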